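/- Suppose n is odd. Then for all nonnegative integers l, k with 2l + k ≤ 3n, the following identity holds in A: O(3n−2l−k, l, k) = λ^{l+k}·O(k, l, 3n−2l−k). -/

import Mathlib

/-!
Setting: `lam n = exp(2πi/n)` is a primitive `n`-th root of unity in `ℂ`.
`DUAlg` is the graded down-up algebra `A(0,1) = ℂ⟨u,d⟩/(d²u - ud², du² - u²d)`,
with generators `uGen`, `dGen`.  The automorphism `g` (of order `2n`) is
determined by `g u = d`, `g d = lam n • u`, and generates the cyclic group `G`,
so that the fixed subring `A^G` is `{a | g a = a}`.  The orbit sum is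
`orbitSum n a b c = u^a (du)^b d^c + (lam n)^(b+c) • (d^a (ud)^b u^c)`.
-/

noncomputable section

/-- `lam n = exp(2πi/n)`, a primitive `n`-th root of unity. -/
def lam (n : ℕ) : ℂ := Complex.exp (2 * (Real.pi : ℂ) * Complex.I / (n : ℂ))

/-- The defining relations of the down-up algebra `A(0,1)`:
`d²u = ud²` and `du² = u²d` (here `0` plays the role of `u`, `1` of `d`). -/
inductive DownUpRel : FreeAlgebra ℂ (Fin 2) → FreeAlgebra ℂ (Fin 2) → Prop
  | rel1 : DownUpRel (FreeAlgebra.ι ℂ 1 * FreeAlgebra.ι ℂ 1 * FreeAlgebra.ι ℂ 0)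
      (FreeAlgebra.ι ℂ 0 * FreeAlgebra.ι ℂ 1 * FreeAlgebra.ι ℂ 1)
  | rel2 : DownUpRel (FreeAlgebra.ι ℂ 1 * FreeAlgebra.ι ℂ 0 * FreeAlgebra.ι ℂ 0)
      (FreeAlgebra.ι ℂ 0 * FreeAlgebra.ι ℂ 0 * FreeAlgebra.ι ℂ 1)

/-- The graded down-up algebra `A(0,1)`. -/
abbrev DUAlg : Type := RingQuot DownUpRel

/-- The generator `u` of `A(0,1)`. -/
def uGen : DUAlg := RingQuot.mkAlgHom ℂ DownUpRel (FreeAlgebra.ι ℂ 0)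

/-- The generator `d` of `A(0,1)`. -/
def dGen : DUAlg := RingQuot.mkAlgHom ℂ DownUpRel (FreeAlgebra.ι ℂ 1)

/-- Orbit sum `O(a,b,c) = u^a (du)^b d^c + λ^(b+c) d^a (ud)^b u^c`. -/
def orbitSum (n a b c : ℕ) : DUAlg :=
  uGen ^ a * (dGen * uGen) ^ b * dGen ^ c
    + (lam n ^ (b + c)) • (dGen ^ a * (uGen * dGen) ^ b * uGen ^ c)

/-- `d²` commutes with `u`. -/
theorem rel_ddu : dGen * dGen * uGen = uGen * dGen * dGen := by
  have h := RingQuot.mkAlgHom_rel ℂ DownUpRel.rel1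
  simp only [map_mul] at h
  exact h

/-- `u²` commutes with `d`. -/
theorem rel_duu : dGen * uGen * uGen = uGen * uGen * dGen := by
  have h := RingQuot.mkAlgHom_rel ℂ DownUpRel.rel2
  simp only [map_mul] at h
  exact h

theorem semiconj_d (l : ℕ) : (dGen * uGen) ^ l * dGen = dGen * (uGen * dGen) ^ l := by
  have h : SemiconjBy dGen (uGen * dGen) (dGen * uGen) := by
    simp only [SemiconjBy, mul_assoc]
  exact (h.pow_right l).eq.symm

theorem semiconj_u (l : ℕ) : (uGen * dGen) ^ l * uGen = uGen * (dGen * uGen) ^ l := by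
  have h : SemiconjBy uGen (dGen * uGen) (uGen * dGen) := by
    simp only [SemiconjBy, mul_assoc]
  exact (h.pow_right l).eq.symm

theorem comm_uu_d : Commute (uGen ^ 2) dGen := by
  rw [Commute, SemiconjBy, pow_two, ← rel_duu, mul_assoc]

theorem comm_dd_u : Commute (dGen ^ 2) uGen := by
  rw [Commute, SemiconjBy, pow_two, rel_ddu, mul_assoc]

theorem comm_uu_u : Commute (uGen ^ 2) uGen := (Commute.refl uGen).pow_left 2

theorem comm_dd_d : Commute (dGen ^ 2) dGen := (Commute.refl dGen).pow_left 2

/-- The reordering identity for exponents of opposite parity. -/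
theorem swap_monomial (a l k : ℕ) (h : Odd (a + k)) :
    uGen ^ a * (dGen * uGen) ^ l * dGen ^ k = dGen ^ k * (uGen * dGen) ^ l * uGen ^ a := by
  rcases Nat.even_or_odd' a with ⟨p, rfl | rfl⟩ <;> rcases Nat.even_or_odd' k with ⟨q, rfl | rfl⟩
  · exfalso; rcases h with ⟨r, hr⟩; omega
  · have hu : Commute (uGen ^ (2 * p)) (dGen ^ (2 * q + 1) * (uGen * dGen) ^ l) := by
      rw [pow_mul]
      exact ((comm_uu_d.pow_right _).mul_right
        ((comm_uu_u.mul_right comm_uu_d).pow_right l)).pow_left p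
    have hd : Commute (dGen ^ (2 * q)) ((dGen * uGen) ^ l) := by
      rw [pow_mul]
      exact ((comm_dd_d.mul_right comm_dd_u).pow_right l).pow_left q
    rw [← hu.eq, mul_assoc]
    congr 1
    rw [pow_succ, ← mul_assoc, ← hd.eq, mul_assoc, semiconj_d, mul_assoc]
  · have hd : Commute (dGen ^ (2 * q)) (uGen ^ (2 * p + 1) * (dGen * uGen) ^ l) := by
      rw [pow_mul]
      exact ((comm_dd_u.pow_right _).mul_right
        ((comm_dd_d.mul_right comm_dd_u).pow_right l)).pow_left q
    have hu : Commute (uGen ^ (2 * p)) ((uGen * dGen) ^ l) := by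
      rw [pow_mul]
      exact ((comm_uu_u.mul_right comm_uu_d).pow_right l).pow_left p
    rw [← hd.eq, mul_assoc (dGen ^ (2 * q))]
    congr 1
    rw [pow_succ, ← mul_assoc, ← hu.eq, mul_assoc, mul_assoc, semiconj_u]
  · exfalso; rcases h with ⟨r, hr⟩; omega

theorem lam_pow_self (n : ℕ) (hn : n ≠ 0) : lam n ^ n = 1 :=
  (Complex.isPrimitiveRoot_exp n hn).pow_eq_one

/-- For `n` odd and `2l + k ≤ 3n`, one has `O(3n-2l-k, l, k) = λ^(l+k) O(k, l, 3n-2l-k)`. -/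
theorem orbitSum_rewrite_odd (n : ℕ) (hodd : Odd n) (l k : ℕ) (hlk : 2 * l + k ≤ 3 * n) :
    orbitSum n (3 * n - 2 * l - k) l k =
      (lam n ^ (l + k)) • orbitSum n k l (3 * n - 2 * l - k) := by
  obtain ⟨a, ha⟩ : ∃ a, a = 3 * n - 2 * l - k := ⟨_, rfl⟩
  rw [← ha]
  have hsum : a + 2 * l + k = 3 * n := by omega
  have hn : n ≠ 0 := by rintro rfl; simp at hodd
  have hak : Odd (a + k) := by
    rcases hodd with ⟨r, hr⟩
    exact ⟨3 * r + 1 - l, by omega⟩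
  have hlam : lam n ^ (l + k) * lam n ^ (l + a) = 1 := by
    rw [← pow_add, show l + k + (l + a) = n * 3 by omega, pow_mul, lam_pow_self n hn, one_pow]
  unfold orbitSum
  rw [smul_add, smul_smul, hlam, one_smul, swap_monomial a l k hak,
    swap_monomial k l a (by rwa [add_comm]), add_comm]
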